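/- arXiv:2205.08388 — 4 statements merged into one kernel-verified Lean document; each statement's English description precedes it below -/
import Mathlib

section
/- Let X be a Hausdorff topological space equipped with its Borel σ-algebra, let T > 0, let 𝒳 = C([0,T];X) be the space of continuous maps from [0,T] into X with the compact-open topology and its Borel σ-algebra, and let Π₀ : 𝒳 → X denote evaluation at time 0. Let 𝒰 ⊆ 𝒳 satisfy: (H1) Π₀(𝒰) = X; (H2) there exists a family 𝒦′ of compact subsets of X such that every inner regular Borel probability measure μ₀ on X satisfies μ₀(A) = sup{ μ₀(K) : K ∈ 𝒦′, K ⊆ A } for every Borel set A ⊆ X; (H3) for every K ∈ 𝒦′ the set Π₀⁻¹(K) ∩ 𝒰 is compact in 𝒳. Then for every inner regular Borel probability measure μ₀ on X there exists a 𝒰-trajectory statistical solution ρ on 𝒳 whose pushforward under Π₀ equals μ₀. -/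
open MeasureTheory Set

/-- A Borel (probability) measure is inner regular: the measure of every
measurable set is the supremum of the measures of its compact subsets. -/
def InnerRegularMeasure {Z : Type*} [TopologicalSpace Z] [MeasurableSpace Z]
    (μ : Measure Z) : Prop :=
  ∀ A : Set Z, MeasurableSet A → μ A = ⨆ (K : Set Z) (_ : IsCompact K) (_ : K ⊆ A), μ K

/-- A `𝒰`-trajectory statistical solution: an inner regular Borel probability
measure carried by a Borel subset of `𝒰`. -/
def IsTrajectoryStatSol {𝒳 : Type*} [TopologicalSpace 𝒳] [MeasurableSpace 𝒳]
    (𝒰 : Set 𝒳) (ρ : Measure 𝒳) : Prop :=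
  IsProbabilityMeasure ρ ∧ InnerRegularMeasure ρ ∧
    ∃ 𝒱 : Set 𝒳, 𝒱 ⊆ 𝒰 ∧ MeasurableSet 𝒱 ∧ ρ 𝒱 = 1

/-!
Restricting to a compact set `C` of trajectories, `g ↦ ∫ g dμ₀` is a positive functional on the
functions of the form `g ∘ Π₀`; M. Riesz's extension theorem extends it to a positive functional on
all continuous functions on `C`, and the Riesz–Markov–Kakutani theorem represents the extension by a
measure on `C`, which therefore lifts `μ₀` restricted to `Π₀(C)`. Countably many sets of `𝒦'` carry
`μ₀`, so cutting their union into disjoint pieces, lifting each piece and summing the lifts gives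
the trajectory statistical solution.
-/

open scoped CompactlySupported

lemma innerRegularMeasure_iff_innerRegular {Z : Type*} [TopologicalSpace Z] [MeasurableSpace Z]
    {μ : Measure Z} : InnerRegularMeasure μ ↔ μ.InnerRegular := by
  constructor
  · intro hμ
    refine ⟨fun A hA r hr => ?_⟩
    rw [hμ A hA] at hr
    simpa only [lt_iSup_iff, exists_prop, and_left_comm] using hr
  · intro _ A hA
    rw [hA.measure_eq_iSup_isCompact]
    exact iSup_congr fun K => iSup_comm

lemma exists_positiveLinearMap_forall_apply_eq {E F : Type*} [AddCommGroup E] [Module ℝ E]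
    [AddCommGroup F] [PartialOrder F] [IsOrderedAddMonoid F] [Module ℝ F] [PosSMulMono ℝ F]
    (L : E →ₗ[ℝ] F) (φ : E →ₗ[ℝ] ℝ) (hφ : ∀ x, 0 ≤ L x → 0 ≤ φ x)
    (hL : ∀ y, ∃ x, y ≤ L x) :
    ∃ ψ : F →ₚ[ℝ] ℝ, ∀ x, ψ (L x) = φ x := by
  have hφ_ker : φ ∈ (LinearMap.ker L).dualAnnihilator := by
    refine (Submodule.mem_dualAnnihilator φ).mpr fun x hx => le_antisymm ?_ (hφ x hx.ge)
    have hneg : 0 ≤ φ (-x) := hφ (-x) (by rw [map_neg, LinearMap.mem_ker.mp hx, neg_zero])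
    rwa [map_neg, neg_nonneg] at hneg
  obtain ⟨χ, rfl⟩ : φ ∈ LinearMap.range L.dualMap :=
    LinearMap.range_dualMap_eq_dualAnnihilator_ker L ▸ hφ_ker
  obtain ⟨ψ, hψ_eq, hψ_nonneg⟩ :=
    riesz_extension (PointedCone.positive ℝ F)
      ⟨LinearMap.range L, χ.domRestrict (LinearMap.range L)⟩
      (by rintro ⟨_, x, rfl⟩ hx; exact hφ x hx)
      (fun y => by
        obtain ⟨x, hx⟩ := hL (-y)
        exact ⟨⟨L x, x, rfl⟩, neg_le_iff_add_nonneg.mp hx⟩)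
  exact ⟨PositiveLinearMap.mk₀ ψ hψ_nonneg, fun x => hψ_eq ⟨L x, x, rfl⟩⟩

lemma innerRegular_comap_of_isInducing {X Y : Type*} [TopologicalSpace X] [MeasurableSpace X]
    [TopologicalSpace Y] [MeasurableSpace Y] {f : Y → X} (hf : Topology.IsInducing f)
    (hf_meas : MeasurableEmbedding f) (μ : Measure X) [μ.InnerRegular] :
    (μ.comap f).InnerRegular where
  innerRegular :=
    (Measure.InnerRegular.innerRegular (μ := μ)).comap hf_meas
      (fun _ hU => hf_meas.measurableSet_image' hU)
      (fun _ hK_range hK => hf.isCompact_preimage' hK hK_range)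

lemma exists_seq_mem_iSup_le_measure_iUnion {X : Type*} [MeasurableSpace X] (μ : Measure X)
    {𝒦 : Set (Set X)} (h𝒦 : 𝒦.Nonempty) :
    ∃ K : ℕ → Set X, (∀ n, K n ∈ 𝒦) ∧ ⨆ A ∈ 𝒦, μ A ≤ μ (⋃ n, K n) := by
  obtain ⟨u, -, hu_tendsto, hu_mem⟩ :=
    exists_seq_tendsto_sSup (h𝒦.image μ) (OrderTop.bddAbove _)
  choose K hK𝒦 hKu using hu_mem
  refine ⟨K, hK𝒦, ?_⟩
  rw [← sSup_image]
  exact le_of_tendsto' hu_tendsto fun n => hKu n ▸ measure_mono (subset_iUnion K n)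

lemma exists_positiveLinearMap_comp_eq_integral {X Y : Type*} [TopologicalSpace X]
    [CompactSpace X] [MeasurableSpace X] [OpensMeasurableSpace X] [TopologicalSpace Y]
    [CompactSpace Y] (f : CocompactMap Y X) (μ : Measure X) [IsFiniteMeasure μ]
    (hμ : ∀ᵐ x ∂μ, x ∈ range f) :
    ∃ Λ : C_c(Y, ℝ) →ₚ[ℝ] ℝ, ∀ g : C_c(X, ℝ), Λ (g.comp f) = ∫ x, g x ∂μ := by
  have : PosSMulMono ℝ C_c(Y, ℝ) :=
    ⟨fun _ hc _ _ hgh y => mul_le_mul_of_nonneg_left (hgh y) hc⟩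
  refine exists_positiveLinearMap_forall_apply_eq
    (CompactlySupportedContinuousMap.compLinearMap f)
    (CompactlySupportedContinuousMap.integralPositiveLinearMap μ).toLinearMap
    (fun g hg => ?_) (fun h => ?_)
  · refine integral_nonneg_of_ae ?_
    filter_upwards [hμ]
    rintro _ ⟨y, rfl⟩
    exact hg y
  · obtain ⟨c, hc⟩ := (isCompact_range (map_continuous h)).bddAbove
    exact ⟨⟨ContinuousMap.const X c, HasCompactSupport.of_compactSpace _⟩,
      fun y => hc (mem_range_self y)⟩

section Lifting

variable {X Y : Type*} [TopologicalSpace X] [T2Space X] [MeasurableSpace X] [BorelSpace X]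
  [TopologicalSpace Y] [T2Space Y] [MeasurableSpace Y] [BorelSpace Y]

lemma exists_innerRegular_map_eq_of_compactSpace [CompactSpace X] [CompactSpace Y] {f : Y → X}
    (hf : Continuous f) (μ : Measure X) [IsFiniteMeasure μ] [μ.InnerRegular]
    (hμ : ∀ᵐ x ∂μ, x ∈ range f) :
    ∃ ν : Measure Y, ν.InnerRegular ∧ ν.map f = μ := by
  let F : CocompactMap Y X := ⟨⟨f, hf⟩, by simp⟩
  obtain ⟨Λ, hΛ⟩ := exists_positiveLinearMap_comp_eq_integral F μ hμ
  let ν := RealRMK.rieszMeasure Λ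
  have : (ν.map f).InnerRegular := Measure.InnerRegular.map_of_continuous hf
  refine ⟨ν, inferInstance, Measure.ext_of_integral_eq_on_compactlySupported fun g => ?_⟩
  calc ∫ x, g x ∂(ν.map f) = ∫ y, g.comp F y ∂ν :=
        integral_map hf.aemeasurable (map_continuous g).aestronglyMeasurable
    _ = Λ (g.comp F) := RealRMK.integral_rieszMeasure Λ (g.comp F)
    _ = ∫ x, g x ∂μ := hΛ g

lemma exists_innerRegular_map_eq_restrict_image {f : Y → X} (hf : Continuous f) {C : Set Y}
    (hC : IsCompact C) (μ : Measure X) [IsFiniteMeasureOnCompacts μ] [μ.InnerRegular] :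
    ∃ ν : Measure Y, ν.InnerRegular ∧ ν.map f = μ.restrict (f '' C) ∧ ν Cᶜ = 0 := by
  have hfC : IsCompact (f '' C) := hC.image hf
  have : CompactSpace C := isCompact_iff_compactSpace.mp hC
  have : CompactSpace (f '' C) := isCompact_iff_compactSpace.mp hfC
  have val_embedding := MeasurableEmbedding.subtype_coe hfC.measurableSet
  let μ' : Measure (f '' C) := μ.comap (↑)
  have : μ'.InnerRegular :=
    innerRegular_comap_of_isInducing Topology.IsInducing.subtypeVal val_embedding μ
  have : IsFiniteMeasureOnCompacts μ' :=
    IsFiniteMeasureOnCompacts.comap' μ continuous_subtype_val val_embedding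
  let F : C → f '' C := (mapsTo_image f C).restrict f C (f '' C)
  have hF : Continuous F := hf.restrict (mapsTo_image f C)
  obtain ⟨ν, _, hν⟩ := exists_innerRegular_map_eq_of_compactSpace hF μ'
    (.of_forall (surjective_mapsTo_image_restrict f C))
  refine ⟨ν.map (↑), Measure.InnerRegular.map_of_continuous continuous_subtype_val, ?_, ?_⟩
  · calc (ν.map (↑)).map f = (ν.map F).map (↑) := by
          rw [Measure.map_map hf.measurable measurable_subtype_coe,
            Measure.map_map measurable_subtype_coe hF.measurable]
          rfl
      _ = μ.restrict (f '' C) := by rw [hν, map_comap_subtype_coe hfC.measurableSet]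
  · rw [Measure.map_apply measurable_subtype_coe hC.measurableSet.compl]
    simp

lemma exists_innerRegular_map_eq_of_ae_mem_iUnion_image {f : Y → X} (hf : Continuous f)
    {C : ℕ → Set Y} (hC : ∀ n, IsCompact (C n)) (μ : Measure X)
    [IsFiniteMeasureOnCompacts μ] [μ.InnerRegular] (hμ : ∀ᵐ x ∂μ, x ∈ ⋃ n, f '' C n) :
    ∃ ρ : Measure Y, ρ.InnerRegular ∧ ρ.map f = μ ∧ ∀ᵐ y ∂ρ, y ∈ ⋃ n, C n := by
  let D : ℕ → Set X := disjointed fun n => f '' C n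
  have hD_meas (n : ℕ) : MeasurableSet (D n) :=
    .disjointed (fun n => ((hC n).image hf).measurableSet) n
  have hD_subset (n : ℕ) : D n ⊆ f '' C n := disjointed_subset _ n
  have (n : ℕ) : IsFiniteMeasure (μ.restrict (D n)) := isFiniteMeasure_restrict.mpr
    (measure_ne_top_of_subset (hD_subset n) ((hC n).image hf).measure_ne_top)
  choose ν hν_reg hν_map hν_compl using fun n =>
    exists_innerRegular_map_eq_restrict_image hf (hC n) (μ.restrict (D n))
  refine ⟨Measure.sum ν, inferInstance, ?_, ?_⟩
  · calc (Measure.sum ν).map f = Measure.sum fun n => μ.restrict (D n) := by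
          simp only [Measure.map_sum hf.aemeasurable, hν_map,
            Measure.restrict_restrict' (hD_meas _), inter_eq_right.mpr (hD_subset _)]
      _ = μ.restrict (⋃ n, f '' C n) := by
          rw [← Measure.restrict_iUnion (disjoint_disjointed _) hD_meas, iUnion_disjointed]
      _ = μ := Measure.restrict_eq_self_of_ae_mem hμ
  · refine Measure.ae_sum_iff.mpr fun n => ?_
    filter_upwards [compl_mem_ae_iff.mpr (hν_compl n)] with y hy
    exact mem_iUnion_of_mem n (not_not.mp hy)

theorem existence_of_trajectory_statistical_solutions_general {p : Y → X} (hp : Continuous p)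
    {𝒰 : Set Y} {𝒦' : Set (Set X)} {μ₀ : Measure X} [IsProbabilityMeasure μ₀]
    (hμ₀ : InnerRegularMeasure μ₀) (H1 : ∀ᵐ x ∂μ₀, x ∈ p '' 𝒰) (H2 : ⨆ K ∈ 𝒦', μ₀ K = 1)
    (H3 : ∀ K ∈ 𝒦', IsCompact (p ⁻¹' K ∩ 𝒰)) :
    ∃ ρ : Measure Y, IsTrajectoryStatSol 𝒰 ρ ∧ μ₀ = ρ.map p := by
  have h𝒦' : 𝒦'.Nonempty := nonempty_iff_ne_empty.mpr fun h => by simp [h] at H2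
  obtain ⟨K, hK𝒦', hK⟩ := exists_seq_mem_iSup_le_measure_iUnion μ₀ h𝒦'
  let C (n : ℕ) : Set Y := p ⁻¹' K n ∩ 𝒰
  have hC (n : ℕ) : IsCompact (C n) := H3 _ (hK𝒦' n)
  have h_image : ⋃ n, p '' C n = (⋃ n, K n) ∩ p '' 𝒰 := by
    simp only [C, inter_comm (p ⁻¹' _), image_inter_preimage, iUnion_inter, inter_comm (p '' 𝒰)]
  have h_ae : ∀ᵐ x ∂μ₀, x ∈ ⋃ n, p '' C n := by
    refine (mem_ae_iff_prob_eq_one (.iUnion fun n => ((hC n).image hp).measurableSet)).mpr ?_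
    calc μ₀ (⋃ n, p '' C n) = μ₀ (⋃ n, K n) := by
          rw [h_image]
          exact measure_inter_conull H1
      _ = 1 := le_antisymm prob_le_one (H2 ▸ hK)
  have := innerRegularMeasure_iff_innerRegular.mp hμ₀
  obtain ⟨ρ, hρ_reg, rfl, hρ_ae⟩ :=
    exists_innerRegular_map_eq_of_ae_mem_iUnion_image hp hC μ₀ h_ae
  have hρ_prob : IsProbabilityMeasure ρ := Measure.isProbabilityMeasure_of_map p
  have hC_meas : MeasurableSet (⋃ n, C n) := .iUnion fun n => (hC n).measurableSet
  exact ⟨ρ, ⟨hρ_prob, innerRegularMeasure_iff_innerRegular.mpr hρ_reg, ⋃ n, C n,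
    iUnion_subset fun n => inter_subset_right, hC_meas,
    (mem_ae_iff_prob_eq_one hC_meas).mp hρ_ae⟩, rfl⟩

end Lifting

theorem existence_of_trajectory_statistical_solutions
    {X : Type*} [TopologicalSpace X] [T2Space X] [MeasurableSpace X] [BorelSpace X]
    (T : ℝ) (hT : 0 < T)
    [MeasurableSpace C(Icc (0 : ℝ) T, X)] [BorelSpace C(Icc (0 : ℝ) T, X)]
    (𝒰 : Set C(Icc (0 : ℝ) T, X))
    (Pi0 : C(Icc (0 : ℝ) T, X) → X)
    (hPi0 : ∀ u : C(Icc (0 : ℝ) T, X), Pi0 u = u ⟨0, Set.left_mem_Icc.mpr hT.le⟩)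
    -- (H1)
    (H1 : Pi0 '' 𝒰 = Set.univ)
    (𝒦' : Set (Set X))
    (h𝒦'_compact : ∀ K ∈ 𝒦', IsCompact K)
    -- (H2)
    (H2 : ∀ μ₀ : Measure X, IsProbabilityMeasure μ₀ → InnerRegularMeasure μ₀ →
      ∀ A : Set X, MeasurableSet A →
        μ₀ A = ⨆ (K : Set X) (_ : K ∈ 𝒦') (_ : K ⊆ A), μ₀ K)
    -- (H3)
    (H3 : ∀ K ∈ 𝒦', IsCompact (Pi0 ⁻¹' K ∩ 𝒰)) :
    ∀ μ₀ : Measure X, IsProbabilityMeasure μ₀ → InnerRegularMeasure μ₀ →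
      ∃ ρ : Measure C(Icc (0 : ℝ) T, X),
        IsTrajectoryStatSol 𝒰 ρ ∧ μ₀ = Measure.map Pi0 ρ := by
  intro μ₀ _ hμ₀
  have hPi0_cont : Continuous Pi0 := by
    rw [funext hPi0]
    exact continuous_eval_const _
  refine existence_of_trajectory_statistical_solutions_general hPi0_cont hμ₀
    (.of_forall fun x => H1 ▸ mem_univ x) ?_ H3
  simpa using (H2 μ₀ inferInstance hμ₀ univ .univ).symm
end

section
/- Let C₀(ℝ²;ℝ) denote the Banach space of continuous functions ℝ² → ℝ vanishing at infinity, and endow its continuous dual space with the weak-* topology and the associated Borel σ-algebra. Then the set of continuous linear functionals Λ for which there exists f ∈ L¹(ℝ²) with Λ(g) = ∫_{ℝ²} g f dx for every g ∈ C₀(ℝ²;ℝ) is a Borel subset of the weak-* dual. (Via the Riesz representation identifying finite signed Borel measures ℳ(ℝ²) with C₀(ℝ²)′, this states that L¹(ℝ²) is Borel measurable in ℳ(ℝ²) with the weak-* topology.) -/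
open MeasureTheory ZeroAtInfty

local notation "E" => EuclideanSpace ℝ (Fin 2)

/-!
Integration against `f ∈ L¹` is a bounded linear map from `L¹` to the dual of `C₀`, hence a
continuous map into the weak-* dual. It is injective, because a function orthogonal to all
compactly supported continuous functions vanishes almost everywhere. As `L¹` is Polish and the
weak-* dual is Hausdorff, the Lusin–Souslin theorem shows that its range is Borel.
-/

open Filter Set Topology

section TestFunctions

variable {X F : Type*} [MeasurableSpace X] {μ : Measure X}
  [NormedAddCommGroup F] [NormedSpace ℝ F] {f : X → F}

theorem tendsto_integral_pow_smul_setIntegral {u : X → ℝ} (hu : Measurable u)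
    (hu_mem : ∀ x, u x ∈ Icc 0 1) (hf : AEStronglyMeasurable f μ)
    (huf : Integrable (fun x ↦ u x • f x) μ) :
    Tendsto (fun n : ℕ ↦ ∫ x, u x ^ (n + 1) • f x ∂μ) atTop (𝓝 (∫ x in u ⁻¹' {1}, f x ∂μ)) := by
  rw [← integral_indicator (hu (measurableSet_singleton 1))]
  refine tendsto_integral_of_dominated_convergence (fun x ↦ ‖u x • f x‖)
    (fun n ↦ (hu.pow_const (n + 1)).aestronglyMeasurable.smul hf) huf.norm
    (fun n ↦ .of_forall fun x ↦ ?_) (.of_forall fun x ↦ ?_)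
  · have hpow : u x ^ (n + 1) ≤ u x := pow_le_of_le_one (hu_mem x).1 (hu_mem x).2 n.succ_ne_zero
    rw [norm_smul, norm_smul, Real.norm_of_nonneg (pow_nonneg (hu_mem x).1 _),
      Real.norm_of_nonneg (hu_mem x).1]
    gcongr
  · by_cases hx : u x = 1
    · simp [indicator, hx]
    · have hpow : Tendsto (fun n : ℕ ↦ u x ^ (n + 1)) atTop (𝓝 0) :=
        (tendsto_pow_atTop_nhds_zero_of_lt_one (hu_mem x).1
          ((hu_mem x).2.lt_of_ne hx)).comp (tendsto_add_atTop_nat 1)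
      simpa [indicator, hx] using hpow.smul_const (f x)

theorem ae_eq_zero_of_integral_continuous_smul_eq_zero [CompleteSpace F] [TopologicalSpace X]
    [BorelSpace X] [LocallyCompactSpace X] [T2Space X] [SecondCountableTopology X]
    (hf : LocallyIntegrable f μ)
    (h : ∀ u : X → ℝ, Continuous u → HasCompactSupport u → ∫ x, u x • f x ∂μ = 0) :
    f =ᵐ[μ] 0 := by
  refine ae_eq_zero_of_forall_setIntegral_isCompact_eq_zero' hf fun K hK ↦ ?_
  have hKδ : IsGδ K := by
    let _ := TopologicalSpace.metrizableSpaceMetric X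
    exact hK.isClosed.isGδ
  obtain ⟨u, rfl, -, hu_supp, hu_mem⟩ :=
    exists_continuous_one_zero_of_isCompact_of_isGδ hK hKδ isClosed_empty (disjoint_empty K)
  have hlim := tendsto_integral_pow_smul_setIntegral u.continuous.measurable hu_mem
    hf.aestronglyMeasurable
    (hf.integrable_smul_left_of_hasCompactSupport u.continuous hu_supp)
  have hzero (n : ℕ) : ∫ x, u x ^ (n + 1) • f x ∂μ = 0 :=
    h _ (u.continuous.pow _) (hu_supp.comp_left (zero_pow n.succ_ne_zero))
  simp only [hzero] at hlim
  exact tendsto_nhds_unique hlim tendsto_const_nhds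

end TestFunctions

section Pairing

variable {X 𝕜 : Type*} [RCLike 𝕜] [TopologicalSpace X] [MeasurableSpace X]

theorem integrable_zeroAtInfty_mul [OpensMeasurableSpace X] {μ : Measure X} {f : X → 𝕜}
    (g : C₀(X, 𝕜)) (hf : Integrable f μ) : Integrable (fun x ↦ g x * f x) μ :=
  hf.bdd_mul g.continuous.aestronglyMeasurable (.of_forall g.toBCF.norm_coe_le_norm)

theorem norm_integral_zeroAtInfty_mul_le {μ : Measure X} {f : X → 𝕜}
    (g : C₀(X, 𝕜)) (hf : Integrable f μ) :
    ‖∫ x, g x * f x ∂μ‖ ≤ ‖g‖ * ∫ x, ‖f x‖ ∂μ := by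
  rw [← integral_const_mul]
  refine norm_integral_le_of_norm_le (hf.norm.const_mul _) (.of_forall fun x ↦ ?_)
  rw [norm_mul]
  gcongr
  exact g.toBCF.norm_coe_le_norm x

/-- The canonical map from `L¹(μ)` to the dual of `C₀(X, 𝕜)`, sending `f` to the functional
`g ↦ ∫ g f dμ`. The dual carries its norm topology here. -/
noncomputable def integralDual [OpensMeasurableSpace X] (μ : Measure X) :
    Lp 𝕜 1 μ →L[𝕜] StrongDual 𝕜 C₀(X, 𝕜) :=
  LinearMap.mkContinuous₂
    (LinearMap.mk₂ 𝕜 (fun f g ↦ ∫ x, g x * f x ∂μ)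
      (fun f₁ f₂ g ↦ by
        rw [← integral_add (integrable_zeroAtInfty_mul g (L1.integrable_coeFn f₁))
          (integrable_zeroAtInfty_mul g (L1.integrable_coeFn f₂))]
        refine integral_congr_ae ?_
        filter_upwards [Lp.coeFn_add f₁ f₂] with x hx
        rw [hx, Pi.add_apply, mul_add])
      (fun c f g ↦ by
        rw [← integral_smul]
        refine integral_congr_ae ?_
        filter_upwards [Lp.coeFn_smul c f] with x hx
        rw [hx, Pi.smul_apply, mul_smul_comm])
      (fun f g₁ g₂ ↦ by
        simp only [ZeroAtInftyContinuousMap.add_apply, add_mul]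
        exact integral_add (integrable_zeroAtInfty_mul g₁ (L1.integrable_coeFn f))
          (integrable_zeroAtInfty_mul g₂ (L1.integrable_coeFn f)))
      (fun c f g ↦ by
        simp only [ZeroAtInftyContinuousMap.smul_apply, smul_mul_assoc]
        exact integral_smul c _))
    1
    (fun f g ↦ by
      rw [one_mul, mul_comm, L1.norm_eq_integral_norm]
      exact norm_integral_zeroAtInfty_mul_le g (L1.integrable_coeFn f))

theorem integralDual_apply [OpensMeasurableSpace X] {μ : Measure X} (f : Lp 𝕜 1 μ)
    (g : C₀(X, 𝕜)) : integralDual μ f g = ∫ x, g x * f x ∂μ :=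
  rfl

theorem integralDual_injective [BorelSpace X] [LocallyCompactSpace X] [T2Space X]
    [SecondCountableTopology X] (μ : Measure X) :
    Function.Injective (integralDual (𝕜 := 𝕜) μ) := by
  refine (injective_iff_map_eq_zero _).2 fun f hf ↦ Lp.eq_zero_iff_ae_eq_zero.2 ?_
  refine ae_eq_zero_of_integral_continuous_smul_eq_zero
    (L1.integrable_coeFn f).locallyIntegrable fun u hu hu_supp ↦ ?_
  let g : C₀(X, 𝕜) :=
    ⟨⟨fun x ↦ (u x : 𝕜), by fun_prop⟩,
      (hu_supp.comp_left (g := ((↑) : ℝ → 𝕜)) RCLike.ofReal_zero).is_zero_at_infty⟩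
  calc ∫ x, u x • f x ∂μ = integralDual μ f g := by
        simp only [integralDual_apply, RCLike.real_smul_eq_coe_mul]
        rfl
    _ = 0 := by rw [hf, zero_apply]

theorem range_toWeakDual_comp_integralDual [OpensMeasurableSpace X] (μ : Measure X) :
    range (StrongDual.toWeakDual ∘ integralDual (𝕜 := 𝕜) μ) =
      {Λ : WeakDual 𝕜 C₀(X, 𝕜) |
        ∃ f : X → 𝕜, Integrable f μ ∧ ∀ g : C₀(X, 𝕜), Λ g = ∫ x, g x * f x ∂μ} := by
  ext Λ
  constructor
  · rintro ⟨f, rfl⟩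
    exact ⟨f, L1.integrable_coeFn f, integralDual_apply f⟩
  · rintro ⟨f, hf, hΛ⟩
    refine ⟨hf.toL1 f, DFunLike.ext _ _ fun g ↦ ?_⟩
    rw [hΛ, Function.comp_apply, StrongDual.toWeakDual_apply, integralDual_apply]
    refine integral_congr_ae ?_
    filter_upwards [hf.coeFn_toL1] with x hx
    rw [hx]

theorem L1_measurable_in_weakStar_dual_of_C0_general [BorelSpace X] [LocallyCompactSpace X]
    [T2Space X] [SecondCountableTopology X] (μ : Measure X) [IsSeparable μ] :
    MeasurableSet[borel (WeakDual 𝕜 C₀(X, 𝕜))]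
      {Λ : WeakDual 𝕜 C₀(X, 𝕜) |
        ∃ f : X → 𝕜, Integrable f μ ∧ ∀ g : C₀(X, 𝕜), Λ g = ∫ x, g x * f x ∂μ} := by
  borelize (WeakDual 𝕜 C₀(X, 𝕜))
  have : Fact ((1 : ENNReal) ≠ ⊤) := ⟨ENNReal.one_ne_top⟩
  rw [← range_toWeakDual_comp_integralDual]
  exact measurableSet_range_of_continuous_injective
    (NormedSpace.Dual.toWeakDual_continuous.comp (integralDual μ).continuous)
    (StrongDual.toWeakDual.injective.comp (integralDual_injective μ))

end Pairing

/-- `L¹(ℝ²)` is a Borel subset of the weak-* dual of `C₀(ℝ²;ℝ)` (i.e. of the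
space of finite signed Borel measures on `ℝ²` with the weak-* topology): the
set of functionals represented by integration against an integrable function
is Borel measurable. -/
theorem L1_measurable_in_weakStar_dual_of_C0 :
    MeasurableSet[borel (WeakDual ℝ C₀(E, ℝ))]
      {Λ : WeakDual ℝ C₀(E, ℝ) |
        ∃ f : E → ℝ, Integrable f (volume : Measure E) ∧
          ∀ g : C₀(E, ℝ), Λ g = ∫ x : E, g x * f x} :=
  L1_measurable_in_weakStar_dual_of_C0_general volume
end

section
/- Fix k ∈ ℕ. The set of all u ∈ L²(ℝ²;ℝ²) for which there exists a finite nonnegative Borel measure μ on ℝ² with support contained in the closed ball of radius k centred at 0 such that ∫_{ℝ²} φ dμ = ∫_{ℝ²} (u¹ ∂₂φ − u² ∂₁φ) dx for every φ ∈ C_c^∞(ℝ²) is closed in L²(ℝ²;ℝ²). Consequently, the set of all u ∈ L²(ℝ²;ℝ²) whose distributional vorticity is a compactly supported finite nonnegative Borel measure is a Borel subset of L²(ℝ²;ℝ²). -/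
open MeasureTheory

local notation "E" => EuclideanSpace ℝ (Fin 2)

/-- The finite nonnegative Borel measure `μ` represents the distributional
vorticity (curl) of the square-integrable vector field `u` on `ℝ²`:
`∫ φ dμ = ∫ (u¹ ∂₂φ - u² ∂₁φ) dx` for all `φ ∈ C_c^∞(ℝ²)`. -/
def IsMeasureVorticity (u : Lp E 2 (volume : Measure E)) (μ : Measure E) : Prop :=
  ∀ φ : E → ℝ, ContDiff ℝ (⊤ : ℕ∞) φ → HasCompactSupport φ →
    ∫ x : E, φ x ∂μ =
      ∫ x : E, (u x 0 * fderiv ℝ φ x (EuclideanSpace.single 1 1) -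
        u x 1 * fderiv ℝ φ x (EuclideanSpace.single 0 1))

/-!
A cutoff equal to `1` on the ball is itself a test function, so the total mass of the vorticity
measure of `u` is a continuous function of `u`. Near any given `u` the admissible measures therefore
range over a weakly compact set, and a projection along a compact factor is closed. The compactly
supported class is the countable union of the closed classes of the balls of radius `m`.
-/

open scoped BoundedContinuousFunction Distributions InnerProductSpace NNReal

section Topology

variable {X Y : Type*} [TopologicalSpace X] [TopologicalSpace Y]

theorem isClosed_setOfPred_exists_mem_of_isCompact {K : Set Y} (hK : IsCompact K)
    {R : Set (X × Y)} (hR : IsClosed R) : IsClosed {x | ∃ y ∈ K, (x, y) ∈ R} := by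
  have : CompactSpace K := isCompact_iff_compactSpace.1 hK
  have hRK : IsClosed {p : X × K | (p.1, (p.2 : Y)) ∈ R} := hR.preimage (by fun_prop)
  convert isClosedMap_fst_of_compactSpace _ hRK using 1
  ext x
  simp

theorem isClosed_of_forall_isClosed_inter_le {α : Type*} [TopologicalSpace α] [LinearOrder α]
    [OrderClosedTopology α] [NoMaxOrder α] {g : X → α} (hg : Continuous g) {S : Set X}
    (hS : ∀ c, IsClosed (S ∩ {x | g x ≤ c})) : IsClosed S := by
  refine isClosed_of_closure_subset fun x hx ↦ ?_
  obtain ⟨c, hc⟩ := exists_gt (g x)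
  have hx' : x ∈ closure ({y | g y < c} ∩ S) :=
    (isOpen_lt hg continuous_const).inter_closure ⟨hc, hx⟩
  exact ((hS c).closure_subset_iff.2 (fun y hy ↦ ⟨hy.2, hy.1.le⟩) hx').1

end Topology

section Moments

variable {X Ω ι : Type*} [TopologicalSpace X] [TopologicalSpace Ω] [MeasurableSpace Ω]

theorem mass_le_integral_of_one_le_on [OpensMeasurableSpace Ω] (μ : FiniteMeasure Ω) {K : Set Ω}
    (hμ : μ Kᶜ = 0) {χ : Ω →ᵇ ℝ} (hχ : ∀ x ∈ K, 1 ≤ χ x) : (μ.mass : ℝ) ≤ ∫ x, χ x ∂μ := by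
  have hμK : ∀ᵐ x ∂(μ : Measure Ω), x ∈ K := (μ.null_iff_toMeasure_null _).1 hμ
  calc (μ.mass : ℝ) = ∫ _ : Ω, (1 : ℝ) ∂(μ : Measure Ω) := by simp [FiniteMeasure.mass]
    _ ≤ ∫ x, χ x ∂μ :=
      integral_mono_ae (integrable_const 1) (χ.integrable _) (hμK.mono hχ)

variable [T2Space Ω] [BorelSpace Ω] {K : Set Ω} {f : ι → Ω →ᵇ ℝ} {ℓ : ι → X → ℝ}

theorem isClosed_setOfPred_exists_mass_le_integral_eq (hK : IsCompact K)
    (hℓ : ∀ i, Continuous (ℓ i)) (C : ℝ≥0) :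
    IsClosed {x | ∃ μ ∈ {μ : FiniteMeasure Ω | μ.mass ≤ C ∧ μ Kᶜ = 0},
      ∀ i, ∫ ω, f i ω ∂μ = ℓ i x} := by
  have hR : IsClosed {p : X × FiniteMeasure Ω | ∀ i, ∫ ω, f i ω ∂p.2 = ℓ i p.1} := by
    simp only [Set.ofPred_forall]
    refine isClosed_iInter fun i ↦ isClosed_eq ?_ ((hℓ i).comp continuous_fst)
    exact (FiniteMeasure.continuous_integral_boundedContinuousFunction (f i)).comp continuous_snd
  exact isClosed_setOfPred_exists_mem_of_isCompact
    (isCompact_setOfPred_finiteMeasure_le_of_isCompact C hK) hR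

theorem isClosed_setOfPred_exists_integral_eq (hK : IsCompact K) (hℓ : ∀ i, Continuous (ℓ i))
    {j : ι} (hj : ∀ ω ∈ K, 1 ≤ f j ω) :
    IsClosed {x | ∃ μ : FiniteMeasure Ω, μ Kᶜ = 0 ∧ ∀ i, ∫ ω, f i ω ∂μ = ℓ i x} := by
  refine isClosed_of_forall_isClosed_inter_le (hℓ j) fun c ↦ ?_
  convert (isClosed_setOfPred_exists_mass_le_integral_eq (f := f) hK hℓ c.toNNReal).inter
    (isClosed_le (hℓ j) (continuous_const (y := c))) using 1
  ext x
  refine and_congr_left fun hx ↦ ⟨?_, fun ⟨μ, ⟨_, hμK⟩, hμ⟩ ↦ ⟨μ, hμK, hμ⟩⟩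
  rintro ⟨μ, hμK, hμ⟩
  have hmass : (μ.mass : ℝ) ≤ c :=
    ((mass_le_integral_of_one_le_on μ hμK hj).trans_eq (hμ j)).trans hx
  exact ⟨μ, ⟨NNReal.le_toNNReal_of_coe_le hmass, hμK⟩, hμ⟩

end Moments

theorem continuous_integral_inner_Lp {α 𝕜 F : Type*} [MeasurableSpace α] {ν : Measure α}
    [RCLike 𝕜] [NormedAddCommGroup F] [InnerProductSpace 𝕜 F] {w : α → F} (hw : MemLp w 2 ν) :
    Continuous fun u : Lp F 2 ν ↦ ∫ x, ⟪u x, w x⟫_𝕜 ∂ν := by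
  have h_inner (u : Lp F 2 ν) : ∫ x, ⟪u x, w x⟫_𝕜 ∂ν = ⟪u, hw.toLp w⟫_𝕜 := by
    rw [L2.inner_def]
    refine integral_congr_ae ?_
    filter_upwards [hw.coeFn_toLp] with x hx
    rw [hx]
  simp_rw [h_inner]
  fun_prop

theorem exists_testFunction_eqOn_one {V : Type*} [NormedAddCommGroup V] [NormedSpace ℝ V]
    [FiniteDimensional ℝ V] {K : Set V} (hK : IsCompact K) :
    ∃ χ : 𝓓((⊤ : TopologicalSpace.Opens V), ℝ), Set.EqOn χ 1 K := by
  obtain ⟨r, hr, hKr⟩ := hK.isBounded.subset_closedBall_lt 0 0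
  let b : ContDiffBump (0 : V) := ⟨r, r + 1, hr, lt_add_one r⟩
  exact ⟨⟨b, b.contDiff, b.hasCompactSupport, Set.subset_univ _⟩,
    fun x hx ↦ b.one_of_mem_closedBall (hKr hx)⟩

/-- The rotated gradient `∇^⊥ φ = (∂₂φ, -∂₁φ)`, the formal adjoint of the planar curl. -/
noncomputable def perpGradient (φ : E → ℝ) (x : E) : E :=
  !₂[fderiv ℝ φ x (EuclideanSpace.single 1 1), -fderiv ℝ φ x (EuclideanSpace.single 0 1)]

theorem inner_perpGradient (φ : E → ℝ) (x v : E) :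
    ⟪v, perpGradient φ x⟫_ℝ = v 0 * fderiv ℝ φ x (EuclideanSpace.single 1 1) -
      v 1 * fderiv ℝ φ x (EuclideanSpace.single 0 1) := by
  simp only [perpGradient, PiLp.inner_apply, RCLike.inner_apply, Real.ringHom_apply,
    Fin.sum_univ_two, Matrix.cons_val_zero, Matrix.cons_val_one, Matrix.cons_val_fin_one]
  ring

theorem memLp_perpGradient {φ : E → ℝ} (hφ : ContDiff ℝ 1 φ) (hφc : HasCompactSupport φ)
    (p : ENNReal) {ν : Measure E} [IsFiniteMeasureOnCompacts ν] : MemLp (perpGradient φ) p ν := by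
  have h_cont : Continuous (perpGradient φ) := by
    have := hφ.continuous_fderiv one_ne_zero
    unfold perpGradient
    fun_prop
  have h_supp : HasCompactSupport (perpGradient φ) :=
    (hφc.fderiv ℝ).comp_left (g := fun L : E →L[ℝ] ℝ ↦
      !₂[L (EuclideanSpace.single 1 1), -L (EuclideanSpace.single 0 1)])
      (by ext i; fin_cases i <;> simp)
  exact h_cont.memLp_of_hasCompactSupport h_supp

theorem isMeasureVorticity_iff_forall_testFunction {u : Lp E 2 (volume : Measure E)}
    {μ : Measure E} :
    IsMeasureVorticity u μ ↔ ∀ φ : 𝓓((⊤ : TopologicalSpace.Opens E), ℝ),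
      ∫ x, φ x ∂μ = ∫ x, ⟪u x, perpGradient φ x⟫_ℝ := by
  simp only [inner_perpGradient]
  exact ⟨fun h φ ↦ h φ φ.contDiff φ.hasCompactSupport,
    fun h φ hφ hφc ↦ h ⟨φ, hφ, hφc, Set.subset_univ _⟩⟩

theorem isClosed_setOfPred_exists_isMeasureVorticity {K : Set E} (hK : IsCompact K) :
    IsClosed {u : Lp E 2 (volume : Measure E) |
      ∃ μ : Measure E, IsFiniteMeasure μ ∧ μ Kᶜ = 0 ∧ IsMeasureVorticity u μ} := by
  obtain ⟨χ, hχ⟩ := exists_testFunction_eqOn_one hK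
  have hℓ (φ : 𝓓((⊤ : TopologicalSpace.Opens E), ℝ)) :
      Continuous fun u : Lp E 2 (volume : Measure E) ↦ ∫ x, ⟪u x, perpGradient φ x⟫_ℝ :=
    continuous_integral_inner_Lp
      (memLp_perpGradient (φ.contDiff.of_le (by simp)) φ.hasCompactSupport 2)
  convert isClosed_setOfPred_exists_integral_eq (f := fun φ : 𝓓(⊤, ℝ) ↦ (φ : E →ᵇ ℝ)) hK hℓ
    (j := χ) (fun x hx ↦ (hχ hx).ge) using 1
  ext u
  simp only [isMeasureVorticity_iff_forall_testFunction]
  exact ⟨fun ⟨μ, hμ, hμK, h⟩ ↦ ⟨⟨μ, hμ⟩, (FiniteMeasure.null_iff_toMeasure_null _ _).2 hμK, h⟩,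
    fun ⟨μ, hμK, h⟩ ↦ ⟨μ, inferInstance, (μ.null_iff_toMeasure_null _).1 hμK, h⟩⟩

/-- The set of square-integrable vector fields on `ℝ²` whose distributional
vorticity is a finite nonnegative Borel measure supported in the closed ball of
radius `k` is closed in `L²`; consequently the vortex-sheet class of vector
fields, whose vorticity is a compactly supported finite nonnegative Borel
measure, is a Borel subset of `L²`. -/
theorem vortex_sheet_class_closed_and_borel (k : ℕ) :
    IsClosed {u : Lp E 2 (volume : Measure E) |
      ∃ μ : Measure E, IsFiniteMeasure μ ∧
        μ (Metric.closedBall (0 : E) k)ᶜ = 0 ∧ IsMeasureVorticity u μ} ∧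
    MeasurableSet[borel (Lp E 2 (volume : Measure E))]
      {u : Lp E 2 (volume : Measure E) |
        ∃ μ : Measure E, IsFiniteMeasure μ ∧
          (∃ m : ℕ, μ (Metric.closedBall (0 : E) m)ᶜ = 0) ∧
          IsMeasureVorticity u μ} := by
  have h_closed (m : ℕ) := isClosed_setOfPred_exists_isMeasureVorticity
    (isCompact_closedBall (0 : E) m)
  refine ⟨h_closed k, ?_⟩
  borelize ↥(Lp E 2 (volume : Measure E))
  convert MeasurableSet.iUnion fun m ↦ (h_closed m).measurableSet using 1
  ext u
  simp only [Set.mem_ofPred_eq, Set.mem_iUnion]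
  exact ⟨fun ⟨μ, hμ, ⟨m, hm⟩, h⟩ ↦ ⟨m, μ, hμ, hm, h⟩, fun ⟨m, μ, hμ, hm, h⟩ ↦ ⟨μ, hμ, ⟨m, hm⟩, h⟩⟩
end

section
/- Let g : ℝ → ℝ be smooth with compact support, and define σ : ℝ² → ℝ² by σ(x) = (‖x‖⁻²)(−x₂, x₁) ∫₀^{‖x‖} s g(s) ds for x ≠ 0 and σ(0) = 0. Then σ is smooth on ℝ² \ {0}, and for every x ≠ 0: (i) div σ(x) = ∂₁σ¹(x) + ∂₂σ²(x) = 0; (ii) the vorticity satisfies ∂₁σ²(x) − ∂₂σ¹(x) = g(‖x‖); (iii) ‖σ(x)‖ ≤ (∫₀^∞ s |g(s)| ds) / ‖x‖. -/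
open MeasureTheory intervalIntegral

local notation "E" => EuclideanSpace ℝ (Fin 2)

/-!
Write `σ(x) = ω(‖x‖) x^⊥` with angular velocity `ω(r) = r⁻² ∫₀^r s g(s) ds`. Since `∇‖x‖ = x / ‖x‖`
is orthogonal to `x^⊥`, every field of this form is divergence-free, and its vorticity is
`2 ω(r) + r ω'(r) = r⁻¹ (r² ω(r))'`, which equals `g(r)` because `r² ω(r)` is the primitive of
`s g(s)`. The decay is `‖σ(x)‖ = |ω(‖x‖)| ‖x‖` together with `|∫₀^r s g(s) ds| ≤ ∫₀^∞ s |g(s)| ds`.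
-/

open Set

section Primitive

variable {F : Type*} [NormedAddCommGroup F] [NormedSpace ℝ F] {f : ℝ → F} {a b : ℝ}

theorem norm_integral_le_integral_Ioi_norm (hf : IntegrableOn f (Ioi a)) (hab : a ≤ b) :
    ‖∫ s in a..b, f s‖ ≤ ∫ s in Ioi a, ‖f s‖ :=
  calc ‖∫ s in a..b, f s‖ ≤ ∫ s in a..b, ‖f s‖ := norm_integral_le_integral_norm hab
    _ = ∫ s in Ioc a b, ‖f s‖ := integral_of_le hab
    _ ≤ ∫ s in Ioi a, ‖f s‖ :=
      setIntegral_mono_set hf.norm (ae_of_all _ fun _ => norm_nonneg _)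
        Ioc_subset_Ioi_self.eventuallyLE

variable [CompleteSpace F]

theorem hasDerivAt_integral_of_continuousOn_Ioi (hf : ContinuousOn f (Ioi a))
    (hint : IntervalIntegrable f volume a b) (hb : a < b) :
    HasDerivAt (fun r => ∫ s in a..r, f s) (f b) b :=
  integral_hasDerivAt_right hint (hf.stronglyMeasurableAtFilter isOpen_Ioi b hb)
    (hf.continuousAt (Ioi_mem_nhds hb))

theorem contDiffOn_succ_integral_Ioi {n : ℕ∞} (hf : ContDiffOn ℝ n f (Ioi a))
    (hint : ∀ r ∈ Ioi a, IntervalIntegrable f volume a r) :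
    ContDiffOn ℝ (n + 1) (fun r => ∫ s in a..r, f s) (Ioi a) := by
  have hderiv : ∀ r ∈ Ioi a, HasDerivAt (fun r => ∫ s in a..r, f s) (f r) r := fun r hr =>
    hasDerivAt_integral_of_continuousOn_Ioi hf.continuousOn (hint r hr) hr
  rw [contDiffOn_succ_iff_deriv_of_isOpen isOpen_Ioi]
  exact ⟨fun r hr => (hderiv r hr).differentiableAt.differentiableWithinAt,
    fun hn => absurd hn (by simp), hf.congr fun r hr => (hderiv r hr).deriv⟩

end Primitive

section RadialFunction

variable {V : Type*} [NormedAddCommGroup V] [InnerProductSpace ℝ V] {x : V}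

theorem hasFDerivAt_norm (hx : x ≠ 0) :
    HasFDerivAt (fun y : V => ‖y‖) (‖x‖⁻¹ • innerSL ℝ x) x := by
  have hsqrt := (hasStrictFDerivAt_norm_sq x).hasFDerivAt.sqrt (by simpa using hx)
  simp only [Real.sqrt_sq (norm_nonneg _)] at hsqrt
  convert! hsqrt using 1
  ext v
  simp only [smul_apply, coe_innerSL_apply, smul_eq_mul, nsmul_eq_mul, Nat.cast_ofNat]
  field_simp

theorem hasFDerivAt_comp_norm {φ : ℝ → ℝ} {φ' : ℝ} (hx : x ≠ 0) (hφ : HasDerivAt φ φ' ‖x‖) :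
    HasFDerivAt (fun y : V => φ ‖y‖) (φ' • ‖x‖⁻¹ • innerSL ℝ x) x :=
  hφ.comp_hasFDerivAt x (hasFDerivAt_norm hx)

theorem contDiffOn_comp_norm {n : WithTop ℕ∞} {φ : ℝ → ℝ} (hφ : ContDiffOn ℝ n φ (Ioi 0)) :
    ContDiffOn ℝ n (fun y : V => φ ‖y‖) {0}ᶜ :=
  hφ.comp (fun _ hx => (contDiffAt_norm ℝ hx).contDiffWithinAt) fun _ hx => norm_pos_iff.2 hx

end RadialFunction

section PlaneField

/-- The divergence `∂₁u¹ + ∂₂u²` of a planar vector field, with the coordinates indexed by `0`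
and `1`. Partial derivatives that do not exist count as `0`. -/
noncomputable def divergence (u : E → E) (x : E) : ℝ :=
  fderiv ℝ (fun y => u y 0) x (EuclideanSpace.single 0 1) +
    fderiv ℝ (fun y => u y 1) x (EuclideanSpace.single 1 1)

/-- The scalar vorticity `∂₁u² - ∂₂u¹` of a planar vector field, with the same conventions as
`divergence`. -/
noncomputable def vorticity (u : E → E) (x : E) : ℝ :=
  fderiv ℝ (fun y => u y 1) x (EuclideanSpace.single 0 1) -
    fderiv ℝ (fun y => u y 0) x (EuclideanSpace.single 1 1)

variable {u : E → E} {u' : E →L[ℝ] E} {x : E}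

theorem fderiv_coord_apply (hu : HasFDerivAt u u' x) (i : Fin 2) (v : E) :
    fderiv ℝ (fun y => u y i) x v = u' v i := by
  have hcoord : HasFDerivAt (fun y => u y i) ((EuclideanSpace.proj i : E →L[ℝ] ℝ).comp u') x :=
    (EuclideanSpace.proj i : E →L[ℝ] ℝ).hasFDerivAt.comp x hu
  rw [hcoord.fderiv]
  rfl

theorem divergence_eq (hu : HasFDerivAt u u' x) :
    divergence u x = u' (EuclideanSpace.single 0 1) 0 + u' (EuclideanSpace.single 1 1) 1 := by
  simp only [divergence, fderiv_coord_apply hu]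

theorem vorticity_eq (hu : HasFDerivAt u u' x) :
    vorticity u x = u' (EuclideanSpace.single 0 1) 1 - u' (EuclideanSpace.single 1 1) 0 := by
  simp only [vorticity, fderiv_coord_apply hu]

end PlaneField

/-- The rotation `x ↦ x^⊥ = (-x₂, x₁)` of the plane by a right angle, as a linear isometry. -/
noncomputable def quarterTurn : E →ₗᵢ[ℝ] E where
  toFun x := (EuclideanSpace.equiv (Fin 2) ℝ).symm ![-(x 1), x 0]
  map_add' x y := by ext i; fin_cases i <;> simp [add_comm]
  map_smul' c x := by ext i; fin_cases i <;> simp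
  norm_map' x := by simp [EuclideanSpace.norm_eq, Fin.sum_univ_two, add_comm]

@[simp]
theorem quarterTurn_apply_zero (x : E) : quarterTurn x 0 = -x 1 := rfl

@[simp]
theorem quarterTurn_apply_one (x : E) : quarterTurn x 1 = x 0 := rfl

/-- The planar vector field `x ↦ ω(‖x‖) x^⊥`, whose flow rotates the circle of radius `r` around
the origin with angular velocity `ω r`. -/
noncomputable def swirl (ω : ℝ → ℝ) (x : E) : E := ω ‖x‖ • quarterTurn x

section Swirl

variable {ω : ℝ → ℝ} {x : E}

theorem norm_swirl (ω : ℝ → ℝ) (x : E) : ‖swirl ω x‖ = |ω ‖x‖| * ‖x‖ := by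
  rw [swirl, norm_smul, quarterTurn.norm_map, Real.norm_eq_abs]

theorem contDiffOn_swirl {n : WithTop ℕ∞} (hω : ContDiffOn ℝ n ω (Ioi 0)) :
    ContDiffOn ℝ n (swirl ω) {0}ᶜ :=
  (contDiffOn_comp_norm hω).smul quarterTurn.contDiff.contDiffOn

theorem hasFDerivAt_swirl {ω' : ℝ} (hx : x ≠ 0) (hω : HasDerivAt ω ω' ‖x‖) :
    HasFDerivAt (swirl ω) (ω ‖x‖ • quarterTurn.toContinuousLinearMap +
      (ω' • ‖x‖⁻¹ • innerSL ℝ x).smulRight (quarterTurn x)) x :=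
  (hasFDerivAt_comp_norm hx hω).smul quarterTurn.toContinuousLinearMap.hasFDerivAt

theorem divergence_swirl (hx : x ≠ 0) (hω : DifferentiableAt ℝ ω ‖x‖) :
    divergence (swirl ω) x = 0 :=
  calc divergence (swirl ω) x
      = -(deriv ω ‖x‖ * (‖x‖⁻¹ * x 0) * x 1) + deriv ω ‖x‖ * (‖x‖⁻¹ * x 1) * x 0 := by
        simp [divergence_eq (hasFDerivAt_swirl hx hω.hasDerivAt),
          EuclideanSpace.inner_single_right]
    _ = 0 := by ring

theorem vorticity_swirl {ω' : ℝ} (hx : x ≠ 0) (hω : HasDerivAt ω ω' ‖x‖) :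
    vorticity (swirl ω) x = 2 * ω ‖x‖ + ‖x‖ * ω' := by
  have hnorm_sq : ‖x‖ ^ 2 = x 0 ^ 2 + x 1 ^ 2 := by
    simp [EuclideanSpace.norm_sq_eq, Fin.sum_univ_two]
  calc vorticity (swirl ω) x
      = ω ‖x‖ + ω' * (‖x‖⁻¹ * x 0) * x 0 - (-ω ‖x‖ + -(ω' * (‖x‖⁻¹ * x 1) * x 1)) := by
        simp [vorticity_eq (hasFDerivAt_swirl hx hω), EuclideanSpace.inner_single_right]
    _ = 2 * ω ‖x‖ + ω' * ‖x‖⁻¹ * (x 0 ^ 2 + x 1 ^ 2) := by ring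
    _ = 2 * ω ‖x‖ + ‖x‖ * ω' := by
        rw [← hnorm_sq]
        field_simp

end Swirl

/-- The angular velocity at radius `r` of the rotating flow with vorticity `g(‖x‖)`: by Stokes, it
is `(2πr²)⁻¹` times the integral of the vorticity over the disc of radius `r`. Its value at `r = 0`
is `0`. -/
noncomputable def angularVelocity (g : ℝ → ℝ) (r : ℝ) : ℝ := (r ^ 2)⁻¹ * ∫ s in (0 : ℝ)..r, s * g s

section AngularVelocity

variable {g : ℝ → ℝ} {r : ℝ}

theorem contDiffOn_succ_angularVelocity {n : ℕ∞} (hg : ContDiffOn ℝ n g (Ioi 0))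
    (hint : ∀ r ∈ Ioi (0 : ℝ), IntervalIntegrable (fun s => s * g s) volume 0 r) :
    ContDiffOn ℝ (n + 1) (angularVelocity g) (Ioi 0) := by
  have hinv : ContDiffOn ℝ (n + 1) (fun r : ℝ => (r ^ 2)⁻¹) (Ioi 0) :=
    (contDiff_id.pow 2).contDiffOn.inv fun r hr => pow_ne_zero 2 (ne_of_gt hr)
  exact hinv.mul (contDiffOn_succ_integral_Ioi (contDiffOn_id.mul hg) hint)

theorem hasDerivAt_angularVelocity (hg : ContinuousOn g (Ioi 0))
    (hint : IntervalIntegrable (fun s => s * g s) volume 0 r) (hr : 0 < r) :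
    HasDerivAt (angularVelocity g) ((g r - 2 * angularVelocity g r) / r) r := by
  have hinv : HasDerivAt (fun r : ℝ => (r ^ 2)⁻¹) _ r := (hasDerivAt_pow 2 r).inv (by positivity)
  have hprim := hasDerivAt_integral_of_continuousOn_Ioi (continuousOn_id.mul hg) hint hr
  convert! hinv.mul hprim using 1
  simp only [angularVelocity, Pi.mul_apply, id, Nat.cast_ofNat, Nat.add_one_sub_one, pow_one]
  field_simp
  ring

theorem abs_angularVelocity_le (hint : IntegrableOn (fun s => s * g s) (Ioi 0)) (hr : 0 ≤ r) :
    |angularVelocity g r| ≤ (∫ s in Ioi (0 : ℝ), s * |g s|) / r ^ 2 := by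
  have hprim : |∫ s in (0 : ℝ)..r, s * g s| ≤ ∫ s in Ioi (0 : ℝ), s * |g s| :=
    (norm_integral_le_integral_Ioi_norm hint hr).trans_eq <|
      setIntegral_congr_fun measurableSet_Ioi fun s (hs : 0 < s) => by
        simp only [norm_mul, Real.norm_eq_abs, abs_of_pos hs]
  rw [angularVelocity, abs_mul, abs_of_nonneg (by positivity), inv_mul_eq_div]
  gcongr

end AngularVelocity

theorem stationary_vector_field_properties_general {n : ℕ∞} {g : ℝ → ℝ}
    (hg : ContDiffOn ℝ n g (Ioi 0)) (hint : IntegrableOn (fun s => s * g s) (Ioi 0)) :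
    ContDiffOn ℝ (n + 1) (swirl (angularVelocity g)) {0}ᶜ ∧
    (∀ x : E, x ≠ 0 → divergence (swirl (angularVelocity g)) x = 0) ∧
    (∀ x : E, x ≠ 0 → vorticity (swirl (angularVelocity g)) x = g ‖x‖) ∧
    (∀ x : E, x ≠ 0 →
      ‖swirl (angularVelocity g) x‖ ≤ (∫ s in Ioi (0 : ℝ), s * |g s|) / ‖x‖) := by
  have hint' : ∀ r ∈ Ioi (0 : ℝ), IntervalIntegrable (fun s => s * g s) volume 0 r := fun r hr =>
    (intervalIntegrable_iff_integrableOn_Ioc_of_le (le_of_lt hr)).2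
      (hint.mono_set Ioc_subset_Ioi_self)
  have hderiv (x : E) (hx : x ≠ 0) := hasDerivAt_angularVelocity hg.continuousOn
    (hint' ‖x‖ (norm_pos_iff.2 hx)) (norm_pos_iff.2 hx)
  refine ⟨contDiffOn_swirl (contDiffOn_succ_angularVelocity hg hint'),
    fun x hx => divergence_swirl hx (hderiv x hx).differentiableAt, fun x hx => ?_, fun x hx => ?_⟩
  · rw [vorticity_swirl hx (hderiv x hx), mul_div_cancel₀ _ (norm_ne_zero_iff.2 hx)]
    ring
  · calc ‖swirl (angularVelocity g) x‖ = |angularVelocity g ‖x‖| * ‖x‖ := norm_swirl _ x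
      _ ≤ (∫ s in Ioi (0 : ℝ), s * |g s|) / ‖x‖ ^ 2 * ‖x‖ := by
        gcongr
        exact abs_angularVelocity_le hint (norm_nonneg x)
      _ = (∫ s in Ioi (0 : ℝ), s * |g s|) / ‖x‖ := by field_simp

/-- Basic properties of the stationary vector field
`σ(x) = (x^⊥/‖x‖²) ∫₀^{‖x‖} s g(s) ds` associated with a smooth compactly
supported radial vorticity profile `g`: it is smooth away from the origin,
divergence-free, has vorticity `g(‖x‖)`, and decays like `1/‖x‖`. -/
theorem stationary_vector_field_properties
    (g : ℝ → ℝ) (hg_smooth : ContDiff ℝ (⊤ : ℕ∞) g) (hg_supp : HasCompactSupport g)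
    (σ : E → E)
    (hσ : ∀ x : E,
      σ x = ((‖x‖ ^ 2)⁻¹ * ∫ s in (0 : ℝ)..‖x‖, s * g s) •
        (EuclideanSpace.equiv (Fin 2) ℝ).symm ![-(x 1), x 0])
    (hσ0 : σ 0 = 0) :
    ContDiffOn ℝ (⊤ : ℕ∞) σ {(0 : E)}ᶜ ∧
    (∀ x : E, x ≠ 0 →
      fderiv ℝ (fun y => σ y 0) x (EuclideanSpace.single 0 1) +
        fderiv ℝ (fun y => σ y 1) x (EuclideanSpace.single 1 1) = 0) ∧
    (∀ x : E, x ≠ 0 →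
      fderiv ℝ (fun y => σ y 1) x (EuclideanSpace.single 0 1) -
        fderiv ℝ (fun y => σ y 0) x (EuclideanSpace.single 1 1) = g ‖x‖) ∧
    (∀ x : E, x ≠ 0 →
      ‖σ x‖ ≤ (∫ s in Set.Ioi (0 : ℝ), s * |g s|) / ‖x‖) := by
  obtain rfl : σ = swirl (angularVelocity g) := funext hσ
  exact stationary_vector_field_properties_general hg_smooth.contDiffOn
    ((continuous_id.mul hg_smooth.continuous).integrable_of_hasCompactSupport
      hg_supp.mul_left).integrableOn
end
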